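/- arXiv:1505.00433 — 2 statements merged into one kernel-verified Lean document; each statement's English description precedes it below -/
import Mathlib

section
/- Let n ≥ 1 and let i_1, i_2, i_3, i_4, i_5 ∈ {0,1} be such that α = i_1^{(n)} i_2^{(n)} i_3^{(n)} i_4^{(n)} i_5^{(n)} is a factor of ω. Then exactly one of the following two alternatives holds: (i) i_2 = 1 − i_1 and i_4 = 1 − i_3, so that α = i_1^{(n+1)} i_3^{(n+1)} i_5^{(n)}; or (ii) i_3 = 1 − i_2 and i_5 = 1 − i_4, so that α = i_1^{(n)} i_2^{(n+1)} i_4^{(n+1)}. -/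
/-- One-sided Thue–Morse sequence: parity of the binary digit sum. -/
def tm (n : ℕ) : ℕ := (Nat.digits 2 n).sum % 2

/-- Two-sided Thue–Morse sequence `ω : ℤ → {0,1}`. -/
def tmZ (n : ℤ) : ℕ := if 0 ≤ n then tm n.toNat else tm (-n - 1).toNat

/-- The block `ω_[m, m+k-1]` of the two-sided Thue–Morse sequence. -/
def tmBlock (m : ℤ) (k : ℕ) : List ℕ := (List.range k).map fun j => tmZ (m + j)

/-- A (nonempty) word is a factor of the two-sided Thue–Morse sequence. -/
def IsFactor (α : List ℕ) : Prop := α ≠ [] ∧ ∃ m : ℤ, α = tmBlock m α.length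

/-- The words `i⁽ⁿ⁾`: `blk i 0 = [i]`, `blk i (n+1) = blk i n ++ blk (1-i) n`. -/
def blk : ℕ → ℕ → List ℕ
  | i, 0 => [i]
  | i, n + 1 => blk i n ++ blk (1 - i) n

/-!
Let `ω'` be `ω` with all letters at negative positions complemented. Each of `ω` and `ω'` is the
image of the other under the substitution `0 ↦ 01`, `1 ↦ 10`. A cube `aaa` cannot occur in such an
image, so two adjacent pairs of complementary letters `a (1 - a) b (1 - b)` occur exactly at the
even positions: at an odd position they would straddle the images of three equal letters. Hence an
occurrence of `(n+1)`-blocks starts at an even position and desubstitutes to an occurrence of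
`n`-blocks in the other sequence, which reduces the claim to five single letters. For these the two
alternatives say that the first, respectively the second, position is even.
-/

lemma tm_le_one (n : ℕ) : tm n ≤ 1 :=
  Nat.le_of_lt_succ (Nat.mod_lt _ two_pos)

lemma tm_two_mul (n : ℕ) : tm (2 * n) = tm n := by
  rcases n.eq_zero_or_pos with rfl | hn
  · rfl
  · simp only [tm, Nat.digits_base_mul one_lt_two hn, List.sum_cons, zero_add]

lemma tm_two_mul_add_one (n : ℕ) : tm (2 * n + 1) = 1 - tm n := by
  have hdigits : Nat.digits 2 (2 * n + 1) = 1 :: Nat.digits 2 n := by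
    rw [add_comm]
    exact Nat.digits_add 2 one_lt_two 1 n one_lt_two (Or.inl one_ne_zero)
  simp only [tm, hdigits, List.sum_cons]
  omega

/-- `f` is the image of the binary sequence `g` under the Thue–Morse substitution `0 ↦ 01`,
`1 ↦ 10`, with the image of the letter `g n` placed at the positions `2 * n` and `2 * n + 1`. -/
structure IsTMImage (f g : ℤ → ℕ) : Prop where
  le_one (n : ℤ) : g n ≤ 1
  apply_two_mul (n : ℤ) : f (2 * n) = g n
  apply_two_mul_add_one (n : ℤ) : f (2 * n + 1) = 1 - g n

namespace IsTMImage

variable {f g u : ℤ → ℕ}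

lemma apply_two_mul_add_two (hf : IsTMImage f g) (n : ℤ) : f (2 * n + 2) = g (n + 1) := by
  rw [← hf.apply_two_mul, mul_add_one]

lemma not_cube (hf : IsTMImage f g) (n : ℤ) : ¬(f n = f (n + 1) ∧ f (n + 1) = f (n + 2)) := by
  have image_ne (k : ℤ) : f (2 * k) ≠ f (2 * k + 1) := by
    have := hf.le_one k
    rw [hf.apply_two_mul, hf.apply_two_mul_add_one]
    omega
  rintro ⟨h₁, h₂⟩
  rcases n.even_or_odd' with ⟨k, rfl | rfl⟩
  · exact image_ne k h₁
  · refine image_ne (k + 1) ?_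
    convert h₂ using 2 <;> ring

lemma apply_two_mul_add_two_eq_compl_iff (hf : IsTMImage f g) (n : ℤ) :
    f (2 * n + 2) = 1 - f (2 * n + 1) ↔ g n = g (n + 1) := by
  have := hf.le_one n
  rw [hf.apply_two_mul_add_two, hf.apply_two_mul_add_one]
  omega

lemma compl_pairs_iff_even (hf : IsTMImage f g) (hg : IsTMImage g u) (p : ℤ) :
    (f (p + 1) = 1 - f p ∧ f (p + 3) = 1 - f (p + 2)) ↔ Even p := by
  rcases p.even_or_odd' with ⟨k, rfl | rfl⟩
  · refine iff_of_true ⟨?_, ?_⟩ (even_two_mul k)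
    · rw [hf.apply_two_mul, hf.apply_two_mul_add_one]
    · rw [← mul_add_one, show 2 * k + 3 = 2 * (k + 1) + 1 by ring, hf.apply_two_mul,
        hf.apply_two_mul_add_one]
  · refine iff_of_false (fun ⟨h₁, h₂⟩ => hg.not_cube k ⟨?_, ?_⟩) (by simp)
    · rw [← hf.apply_two_mul_add_two_eq_compl_iff, ← h₁]
      ring_nf
    · rw [show k + 2 = k + 1 + 1 by ring, ← hf.apply_two_mul_add_two_eq_compl_iff]
      convert h₂ using 2
      · ring
      · ring_nf

end IsTMImage

/-- The sequence `ω` with the letters at negative positions complemented. Desubstituting `ω` gives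
this sequence rather than `ω`, because `ω (2 * n) = 1 - ω n` for negative `n`. -/
def tmZTwist (n : ℤ) : ℕ := if 0 ≤ n then tm n.toNat else 1 - tm (-n - 1).toNat

lemma tmZ_natCast (n : ℕ) : tmZ n = tm n := by simp [tmZ]

lemma tmZTwist_natCast (n : ℕ) : tmZTwist n = tm n := by simp [tmZTwist]

lemma tmZ_negSucc (n : ℕ) : tmZ (Int.negSucc n) = tm n := by
  simp [tmZ, Int.neg_negSucc]

lemma tmZTwist_negSucc (n : ℕ) : tmZTwist (Int.negSucc n) = 1 - tm n := by
  simp [tmZTwist, Int.neg_negSucc]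

lemma two_mul_negSucc (n : ℕ) : 2 * Int.negSucc n = Int.negSucc (2 * n + 1) := by omega

lemma two_mul_negSucc_add_one (n : ℕ) : 2 * Int.negSucc n + 1 = Int.negSucc (2 * n) := by omega

lemma isTMImage_tmZ_tmZTwist : IsTMImage tmZ tmZTwist where
  le_one
    | .ofNat n => (tmZTwist_natCast n).trans_le (tm_le_one n)
    | .negSucc n => (tmZTwist_negSucc n).trans_le (Nat.sub_le 1 _)
  apply_two_mul
    | .ofNat n => (tmZ_natCast (2 * n)).trans <| by
      rw [Int.ofNat_eq_natCast, tmZTwist_natCast, tm_two_mul]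
    | .negSucc n => by
      rw [two_mul_negSucc, tmZ_negSucc, tmZTwist_negSucc, tm_two_mul_add_one]
  apply_two_mul_add_one
    | .ofNat n => (tmZ_natCast (2 * n + 1)).trans <| by
      rw [Int.ofNat_eq_natCast, tmZTwist_natCast, tm_two_mul_add_one]
    | .negSucc n => by
      have := tm_le_one n
      rw [two_mul_negSucc_add_one, tmZ_negSucc, tmZTwist_negSucc, tm_two_mul]
      omega

lemma isTMImage_tmZTwist_tmZ : IsTMImage tmZTwist tmZ where
  le_one
    | .ofNat n => (tmZ_natCast n).trans_le (tm_le_one n)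
    | .negSucc n => (tmZ_negSucc n).trans_le (tm_le_one n)
  apply_two_mul
    | .ofNat n => (tmZTwist_natCast (2 * n)).trans <| by
      rw [Int.ofNat_eq_natCast, tmZ_natCast, tm_two_mul]
    | .negSucc n => by
      have := tm_le_one n
      rw [two_mul_negSucc, tmZTwist_negSucc, tmZ_negSucc, tm_two_mul_add_one]
      omega
  apply_two_mul_add_one
    | .ofNat n => (tmZTwist_natCast (2 * n + 1)).trans <| by
      rw [Int.ofNat_eq_natCast, tmZ_natCast, tm_two_mul_add_one]
    | .negSucc n => by
      rw [two_mul_negSucc_add_one, tmZTwist_negSucc, tmZ_negSucc, tm_two_mul]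

/-- The Thue–Morse substitution `0 ↦ 01`, `1 ↦ 10` on finite words. -/
def tmSubst (l : List ℕ) : List ℕ := l.flatMap fun a => [a, 1 - a]

lemma tmSubst_cons (a : ℕ) (l : List ℕ) : tmSubst (a :: l) = a :: (1 - a) :: tmSubst l := rfl

lemma tmSubst_append (l l' : List ℕ) : tmSubst (l ++ l') = tmSubst l ++ tmSubst l' :=
  List.flatMap_append

lemma length_tmSubst (l : List ℕ) : (tmSubst l).length = 2 * l.length := by
  simp [tmSubst, mul_comm]

lemma tmSubst_injective : Function.Injective tmSubst
  | [], [], _ => rfl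
  | a :: l, b :: l', h => by
    simp only [tmSubst_cons, List.cons.injEq] at h
    rw [h.1, tmSubst_injective h.2.2]

lemma blk_succ_eq_tmSubst (i n : ℕ) : blk i (n + 1) = tmSubst (blk i n) := by
  induction n generalizing i with
  | zero => rfl
  | succ n ih =>
    calc blk i (n + 2)
        = tmSubst (blk i n) ++ tmSubst (blk (1 - i) n) := congrArg₂ _ (ih i) (ih (1 - i))
      _ = tmSubst (blk i (n + 1)) := (tmSubst_append _ _).symm

lemma blk_length_pos (i n : ℕ) : 0 < (blk i n).length := by
  induction n generalizing i with
  | zero => exact Nat.one_pos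
  | succ n ih => simp only [blk, List.length_append, Nat.add_pos_left (ih i)]

/-- The word of length `k` that occurs in `f` at position `m`. -/
def window (f : ℤ → ℕ) (m : ℤ) (k : ℕ) : List ℕ := (List.range k).map fun j : ℕ => f (m + j)

lemma tmBlock_eq_window (m : ℤ) (k : ℕ) : tmBlock m k = window tmZ m k := by
  -- In `tmBlock` it is the list `List.range k`, not the index `j`, that is coerced to `ℤ`.
  simp [tmBlock, window, List.map_eq_flatMap, List.flatMap_assoc]

lemma window_succ (f : ℤ → ℕ) (m : ℤ) (k : ℕ) :
    window f m (k + 1) = f m :: window f (m + 1) k := by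
  simp [window, List.range_succ_eq_map, Function.comp_def, add_assoc, add_comm (1 : ℤ)]

namespace IsTMImage

variable {f g u : ℤ → ℕ}

lemma window_two_mul (hf : IsTMImage f g) (m : ℤ) (k : ℕ) :
    window f (2 * m) (2 * k) = tmSubst (window g m k) := by
  induction k generalizing m with
  | zero => rfl
  | succ k ih =>
    rw [mul_add_one, window_succ, window_succ, window_succ, tmSubst_cons, ← ih, mul_add_one,
      hf.apply_two_mul, hf.apply_two_mul_add_one, add_assoc, one_add_one_eq_two]

lemma even_of_tmSubst_eq_window (hf : IsTMImage f g) (hg : IsTMImage g u) {p : ℤ}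
    {l : List ℕ} (hl : 2 ≤ l.length) (h : tmSubst l = window f p (2 * l.length)) :
    Even p := by
  obtain ⟨a, b, l, rfl⟩ : ∃ a b l', l = a :: b :: l' := by
    match l, hl with
    | a :: b :: l', _ => exact ⟨a, b, l', rfl⟩
  simp only [tmSubst_cons, List.length_cons, mul_add_one, window_succ, List.cons.injEq] at h
  obtain ⟨ha, ha', hb, hb', -⟩ := h
  simp only [add_assoc, Int.reduceAdd] at hb hb'
  exact (hf.compl_pairs_iff_even hg p).1 ⟨by rw [← ha', ha], by rw [← hb', hb]⟩

lemma exists_desubst (hf : IsTMImage f g) (hg : IsTMImage g u) {p : ℤ}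
    {l : List ℕ} (hl : 2 ≤ l.length) (h : tmSubst l = window f p (2 * l.length)) :
    ∃ m, l = window g m l.length := by
  obtain ⟨m, rfl⟩ := (hf.even_of_tmSubst_eq_window hg hl h).exists_two_nsmul
  refine ⟨m, tmSubst_injective ?_⟩
  rw [← hf.window_two_mul]
  simpa only [two_nsmul, two_mul] using h

lemma five_letters_regrouping (hf : IsTMImage f g) (hg : IsTMImage g u) {m : ℤ}
    {i₁ i₂ i₃ i₄ i₅ : ℕ} (h : [i₁, i₂, i₃, i₄, i₅] = window f m 5) :
    Xor (i₂ = 1 - i₁ ∧ i₄ = 1 - i₃) (i₃ = 1 - i₂ ∧ i₅ = 1 - i₄) := by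
  simp only [window_succ, List.cons.injEq, add_assoc, Int.reduceAdd] at h
  obtain ⟨rfl, rfl, rfl, rfl, rfl, -⟩ := h
  have first_iff := hf.compl_pairs_iff_even hg m
  have second_iff := hf.compl_pairs_iff_even hg (m + 1)
  simp only [add_assoc, Int.reduceAdd] at second_iff
  rw [first_iff, second_iff, Int.even_add_one]
  exact xor_not_right.2 Iff.rfl

end IsTMImage

theorem five_blocks_regrouping_general {f g : ℤ → ℕ} (hf : IsTMImage f g) (hg : IsTMImage g f)
    (n : ℕ) {m : ℤ} {i₁ i₂ i₃ i₄ i₅ : ℕ}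
    (h : blk i₁ n ++ blk i₂ n ++ blk i₃ n ++ blk i₄ n ++ blk i₅ n =
      window f m (blk i₁ n ++ blk i₂ n ++ blk i₃ n ++ blk i₄ n ++ blk i₅ n).length) :
    Xor (i₂ = 1 - i₁ ∧ i₄ = 1 - i₃) (i₃ = 1 - i₂ ∧ i₅ = 1 - i₄) := by
  induction n generalizing f g m with
  | zero => exact hf.five_letters_regrouping hg h
  | succ n ih =>
    simp only [blk_succ_eq_tmSubst, ← tmSubst_append, length_tmSubst] at h
    have two_le_length :
        2 ≤ (blk i₁ n ++ blk i₂ n ++ blk i₃ n ++ blk i₄ n ++ blk i₅ n).length := by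
      have := blk_length_pos i₁ n
      have := blk_length_pos i₂ n
      simp only [List.length_append]
      omega
    obtain ⟨k, hk⟩ := hf.exists_desubst hg two_le_length h
    exact ih hg hf hk

/-- If `i₁⁽ⁿ⁾ i₂⁽ⁿ⁾ i₃⁽ⁿ⁾ i₄⁽ⁿ⁾ i₅⁽ⁿ⁾` is a factor of the two-sided Thue–Morse
sequence (`n ≥ 1`), then exactly one of the two regroupings into `(n+1)`-blocks holds. -/
theorem five_blocks_regrouping (n : ℕ) (hn : 1 ≤ n)
    (i₁ i₂ i₃ i₄ i₅ : ℕ)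
    (h₁ : i₁ = 0 ∨ i₁ = 1) (h₂ : i₂ = 0 ∨ i₂ = 1) (h₃ : i₃ = 0 ∨ i₃ = 1)
    (h₄ : i₄ = 0 ∨ i₄ = 1) (h₅ : i₅ = 0 ∨ i₅ = 1)
    (h : IsFactor (blk i₁ n ++ blk i₂ n ++ blk i₃ n ++ blk i₄ n ++ blk i₅ n)) :
    Xor' (i₂ = 1 - i₁ ∧ i₄ = 1 - i₃) (i₃ = 1 - i₂ ∧ i₅ = 1 - i₄) := by
  obtain ⟨-, m, hm⟩ := h
  exact five_blocks_regrouping_general isTMImage_tmZ_tmZTwist isTMImage_tmZTwist_tmZ n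
    (hm.trans (tmBlock_eq_window m _))
end

section
/- For every factor α of ω with |α| ≥ 3, one has φ(α) = Σ_{i ∈ {0,1}, αi a factor of ω} φ(αi) and φ(α) = Σ_{i ∈ {0,1}, iα a factor of ω} φ(iα), where αi (respectively iα) denotes α with the letter i appended (respectively prepended). -/
/-!
The identity for left extensions is immediate from the recursion. The one for right extensions
follows from it by reversal: `ω` is a palindrome, so the reversal of a factor is a factor, and `φ`
turns out to be invariant under reversal.

For this invariance, note that every factor of `ω` occurs in the one-sided Thue–Morse sequence,
which is the concatenation of the pairs `01` and `10` obtained from its own letters `0` and `1`.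
Since `01010` and `10101` are not factors, every factor `α` with `|α| ≥ 5` contains a square of a
letter, which straddles two pairs; hence the position of `α` relative to the pairs is determined,
and `α` is covered by the pairs coming from a unique shorter factor `β`. The recursion gives
`φ α = φ β / 2`. Reversal of `α` amounts to reversing `β` and exchanging the letters `0` and
`1`, so invariance under both operations is proved together by induction on the length; for length
`4`, `φ` only depends on whether the two middle letters are equal.
-/

theorem tm_lt_two (n : ℕ) : tm n < 2 := Nat.mod_lt _ two_pos

theorem tm_eq_tm_div_two_add (n : ℕ) : tm n = (tm (n / 2) + n % 2) % 2 := by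
  rcases Nat.eq_zero_or_pos n with rfl | hn
  · rfl
  · simp only [tm, Nat.digits_def' one_lt_two hn, List.sum_cons]
    omega

theorem tm_eq_iff_of_mod_two_eq {p q : ℕ} (h : p % 2 = q % 2) :
    tm p = tm q ↔ tm (p / 2) = tm (q / 2) := by
  have := tm_lt_two (p / 2)
  have := tm_lt_two (q / 2)
  rw [tm_eq_tm_div_two_add p, tm_eq_tm_div_two_add q]
  omega

theorem tm_eq_iff_of_mod_two_ne {p q : ℕ} (h : p % 2 ≠ q % 2) :
    tm p = tm q ↔ tm (p / 2) ≠ tm (q / 2) := by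
  have := tm_lt_two (p / 2)
  have := tm_lt_two (q / 2)
  rw [tm_eq_tm_div_two_add p, tm_eq_tm_div_two_add q]
  omega

theorem mod_two_eq_one_of_tm_eq_tm_succ {n : ℕ} (h : tm n = tm (n + 1)) : n % 2 = 1 := by
  by_contra hn
  refine (tm_eq_iff_of_mod_two_ne (by omega)).1 h ?_
  congr 1
  omega

theorem tm_succ_ne_of_tm_eq_tm_succ {n : ℕ} (h : tm n = tm (n + 1)) :
    tm (n + 1) ≠ tm (n + 2) := fun h' => by
  have := mod_two_eq_one_of_tm_eq_tm_succ h
  have := mod_two_eq_one_of_tm_eq_tm_succ h'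
  omega

theorem exists_lt_four_tm_eq_tm_succ (m : ℕ) : ∃ i < 4, tm (m + i) = tm (m + i + 1) := by
  have letters_differ : tm (m / 2) ≠ tm (m / 2 + 1) ∨ tm (m / 2 + 1) ≠ tm (m / 2 + 2) := by
    by_contra! h
    exact tm_succ_ne_of_tm_eq_tm_succ h.1 h.2
  obtain ⟨b, hb, hne⟩ : ∃ b ≤ 1, tm (m / 2 + b) ≠ tm (m / 2 + b + 1) := by
    rcases letters_differ with h | h
    exacts [⟨0, zero_le_one, h⟩, ⟨1, le_rfl, h⟩]
  refine ⟨2 * b + 1 - m % 2, by omega, (tm_eq_iff_of_mod_two_ne (by omega)).2 ?_⟩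
  convert hne using 2 <;> omega

theorem tm_two_pow_mul_add (N a : ℕ) {j : ℕ} (hj : j < 2 ^ N) :
    tm (2 ^ N * a + j) = (tm a + tm j) % 2 := by
  induction N generalizing j with
  | zero =>
    obtain rfl : j = 0 := by omega
    simpa [show tm 0 = 0 from rfl] using (Nat.mod_eq_of_lt (tm_lt_two a)).symm
  | succ N ih =>
    rw [pow_succ] at hj
    rw [tm_eq_tm_div_two_add, tm_eq_tm_div_two_add j,
      show 2 ^ (N + 1) * a + j = 2 * (2 ^ N * a) + j by ring,
      show (2 * (2 ^ N * a) + j) / 2 = 2 ^ N * a + j / 2 by omega, ih (by omega)]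
    omega

theorem tm_two_pow_sub_one_sub (N : ℕ) {j : ℕ} (hj : j < 2 ^ N) :
    tm (2 ^ N - 1 - j) = (tm j + N) % 2 := by
  induction N generalizing j with
  | zero =>
    obtain rfl : j = 0 := by omega
    rfl
  | succ N ih =>
    rw [pow_succ] at hj ⊢
    rw [tm_eq_tm_div_two_add, tm_eq_tm_div_two_add j,
      show (2 ^ N * 2 - 1 - j) / 2 = 2 ^ N - 1 - j / 2 by omega, ih (by omega)]
    omega

/-- The block of length `k` starting at position `m` of the one-sided Thue–Morse sequence. Every
factor of `ω` has this form, see `isFactor_iff_exists_tmWord`. -/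
def tmWord (m k : ℕ) : List ℕ := (List.range k).map fun j => tm (m + j)

theorem length_tmWord (m k : ℕ) : (tmWord m k).length = k := by simp [tmWord]

theorem tmWord_eq_iff {m n k : ℕ} :
    tmWord m k = tmWord n k ↔ ∀ j < k, tm (m + j) = tm (n + j) := by
  simp [tmWord, List.map_inj_left]

theorem tmWord_succ (m k : ℕ) : tmWord m (k + 1) = tm m :: tmWord (m + 1) k := by
  simp [tmWord, List.range_succ_eq_map, Function.comp_def, add_comm, add_left_comm]

-- In `tmBlock` the elaborator coerces the whole list `List.range k` to `List ℤ`.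
theorem tmBlock_eq_map (m : ℤ) (k : ℕ) :
    tmBlock m k = (List.range k).map fun j : ℕ => tmZ (m + j) := by
  simp [tmBlock, ← List.map_eq_flatMap, Function.comp_def]

theorem length_tmBlock (m : ℤ) (k : ℕ) : (tmBlock m k).length = k := by simp [tmBlock_eq_map]

theorem tmBlock_succ (m : ℤ) (k : ℕ) : tmBlock m (k + 1) = tmZ m :: tmBlock (m + 1) k := by
  simp [tmBlock_eq_map, List.range_succ_eq_map, Function.comp_def, add_comm, add_left_comm]

theorem tmZ_lt_two (n : ℤ) : tmZ n < 2 := by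
  unfold tmZ
  split_ifs <;> exact tm_lt_two _

theorem tmZ_neg_sub_one (n : ℤ) : tmZ (-n - 1) = tmZ n := by
  unfold tmZ
  split_ifs <;> first | omega | (congr 1; omega)

theorem reverse_tmBlock (m : ℤ) (k : ℕ) : (tmBlock m k).reverse = tmBlock (-m - k) k := by
  simp only [tmBlock_eq_map]
  refine List.ext_getElem (by simp) fun j hj _ => ?_
  have hj : j < k := by simpa using hj
  simp only [List.getElem_reverse, List.getElem_map, List.getElem_range, List.length_map,
    List.length_range]
  rw [← tmZ_neg_sub_one]
  congr 1
  omega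

theorem tmBlock_natCast (n k : ℕ) : tmBlock n k = tmWord n k := by
  rw [tmBlock_eq_map]
  exact List.map_congr_left fun j _ => if_pos (by positivity)

-- The one-sided sequence has the letter `0` at positions `5` and `6`, hence two adjacent copies of
-- its prefix of length `2 ^ (2 * N)` meeting at position `6 * 2 ^ (2 * N)`. This prefix is a
-- palindrome, so the two copies form the block of `ω` at the positions `-2 ^ (2 * N)`, …,
-- `2 ^ (2 * N) - 1`.
theorem exists_tmBlock_eq_tmWord (m : ℤ) (k : ℕ) : ∃ n : ℕ, tmBlock m k = tmWord n k := by
  obtain ⟨N, hN⟩ : ∃ N : ℕ, m.natAbs + k < 2 ^ (2 * N) :=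
    ⟨m.natAbs + k, (Nat.lt_two_pow_self).trans_le (Nat.pow_le_pow_right two_pos (by omega))⟩
  have copy_right {j : ℕ} (hj : j < 2 ^ (2 * N)) : tm (2 ^ (2 * N) * 6 + j) = tm j := by
    have := tm_lt_two j
    rw [tm_two_pow_mul_add _ _ hj, show tm 6 = 0 by decide]
    omega
  have copy_left {j : ℕ} (hj : j < 2 ^ (2 * N)) :
      tm (2 ^ (2 * N) * 5 + (2 ^ (2 * N) - 1 - j)) = tm j := by
    have := tm_lt_two j
    rw [tm_two_pow_mul_add _ _ (by omega), tm_two_pow_sub_one_sub _ hj, show tm 5 = 0 by decide]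
    omega
  generalize 2 ^ (2 * N) = P at *
  refine ⟨(P * 6 + m).toNat, ?_⟩
  rw [tmBlock_eq_map]
  refine List.map_congr_left fun j hj => ?_
  have hj := List.mem_range.1 hj
  unfold tmZ
  split_ifs
  · rw [← copy_right (by omega)]
    congr 1
    omega
  · rw [← copy_left (by omega)]
    congr 1
    omega

theorem isFactor_tmBlock (m : ℤ) {k : ℕ} (hk : 0 < k) : IsFactor (tmBlock m k) := by
  refine ⟨List.ne_nil_of_length_pos ?_, m, ?_⟩ <;> rw [length_tmBlock]
  exact hk

theorem isFactor_iff_exists_tmWord {α : List ℕ} :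
    IsFactor α ↔ α ≠ [] ∧ ∃ m : ℕ, α = tmWord m α.length := by
  refine and_congr_right fun _ => ⟨?_, ?_⟩
  · rintro ⟨m, hm⟩
    obtain ⟨n, hn⟩ := exists_tmBlock_eq_tmWord m α.length
    exact ⟨n, hm.trans hn⟩
  · rintro ⟨n, hn⟩
    exact ⟨n, hn.trans (tmBlock_natCast _ _).symm⟩

theorem isFactor_tmWord (m : ℕ) {k : ℕ} (hk : 0 < k) : IsFactor (tmWord m k) :=
  tmBlock_natCast m k ▸ isFactor_tmBlock m hk

theorem isFactor_cons_tmWord_iff {i m k : ℕ} :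
    IsFactor (i :: tmWord m k) ↔ ∃ n, tm n = i ∧ tmWord (n + 1) k = tmWord m k := by
  simp only [isFactor_iff_exists_tmWord, List.length_cons, length_tmWord, tmWord_succ,
    List.cons.injEq, ne_eq, reduceCtorEq, not_false_eq_true, true_and, eq_comm]

theorem IsFactor.reverse {α : List ℕ} (hα : IsFactor α) : IsFactor α.reverse := by
  obtain ⟨hne, m, hm⟩ := hα
  rw [hm, reverse_tmBlock]
  exact isFactor_tmBlock _ (List.length_pos_iff.2 hne)

theorem isFactor_reverse_iff {α : List ℕ} : IsFactor α.reverse ↔ IsFactor α :=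
  ⟨fun h => α.reverse_reverse ▸ h.reverse, IsFactor.reverse⟩

theorem IsFactor.exists_isFactor_cons {α : List ℕ} (hα : IsFactor α) :
    ∃ i < 2, IsFactor (i :: α) := by
  obtain ⟨-, m, hm⟩ := hα
  have h := isFactor_tmBlock (m - 1) (Nat.succ_pos α.length)
  rw [tmBlock_succ, sub_add_cancel, ← hm] at h
  exact ⟨_, tmZ_lt_two _, h⟩

theorem IsFactor.lt_two_of_cons {i : ℕ} {α : List ℕ} (h : IsFactor (i :: α)) : i < 2 := by
  obtain ⟨-, m, hm⟩ := h
  rw [List.length_cons, tmBlock_succ, List.cons.injEq] at hm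
  exact hm.1 ▸ tmZ_lt_two m

theorem mod_two_eq_of_tmWord_eq {m n k : ℕ} (hk : 5 ≤ k) (h : tmWord m k = tmWord n k) :
    m % 2 = n % 2 := by
  rw [tmWord_eq_iff] at h
  obtain ⟨i, hi, heq⟩ := exists_lt_four_tm_eq_tm_succ m
  have hm := mod_two_eq_one_of_tm_eq_tm_succ heq
  have hn : (n + i) % 2 = 1 := by
    apply mod_two_eq_one_of_tm_eq_tm_succ
    rw [← h i (by omega), heq]
    exact h (i + 1) (by omega)
  omega

theorem tmWord_eq_iff_of_mod_two_eq {m n k : ℕ} (hk : 0 < k) (h : m % 2 = n % 2) :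
    tmWord m k = tmWord n k ↔
      tmWord (m / 2) ((m % 2 + k + 1) / 2) = tmWord (n / 2) ((m % 2 + k + 1) / 2) := by
  simp only [tmWord_eq_iff]
  constructor
  · intro heq j hj
    have := heq (2 * j - m % 2) (by omega)
    rw [tm_eq_iff_of_mod_two_eq (by omega)] at this
    convert this using 2 <;> omega
  · intro heq i hi
    have := heq ((m % 2 + i) / 2) (by omega)
    rw [tm_eq_iff_of_mod_two_eq (by omega)]
    convert this using 2 <;> omega

/-- A word is left special if each of the two letters can be prepended to it to give a factor. The
recursion for `φ` halves the value exactly at left special words. -/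
def LeftSpecial (α : List ℕ) : Prop := IsFactor (0 :: α) ∧ IsFactor (1 :: α)

theorem leftSpecial_iff_forall {α : List ℕ} :
    LeftSpecial α ↔ ∀ i < 2, IsFactor (i :: α) := by
  constructor
  · rintro ⟨h0, h1⟩ i hi
    interval_cases i
    exacts [h0, h1]
  · exact fun h => ⟨h 0 (by decide), h 1 (by decide)⟩

theorem isFactor_one_sub_cons_iff_leftSpecial {i : ℕ} {α : List ℕ} (h : IsFactor (i :: α)) :
    IsFactor ((1 - i) :: α) ↔ LeftSpecial α := by
  have := h.lt_two_of_cons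
  interval_cases i <;> simp [LeftSpecial, h]

theorem exists_of_leftSpecial_tmWord {m k : ℕ} (h : LeftSpecial (tmWord m k)) {i : ℕ}
    (hi : i < 2) : ∃ n, tm n = i ∧ ∀ j < k, tm (n + 1 + j) = tm (m + j) := by
  simpa only [isFactor_cons_tmWord_iff, tmWord_eq_iff] using leftSpecial_iff_forall.1 h i hi

theorem isFactor_of_middle_ne {w x y z : ℕ} (hw : w < 2) (hx : x < 2) (hy : y < 2) (hz : z < 2)
    (hxy : x ≠ y) : IsFactor [w, x, y, z] := by
  have occurs : ∀ w < 2, ∀ x < 2, ∀ z < 2, ∃ n < 12, tmWord n 4 = [w, x, 1 - x, z] := by decide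
  obtain rfl : y = 1 - x := by omega
  obtain ⟨n, -, hn⟩ := occurs w hw x hx z hz
  exact hn ▸ isFactor_tmWord n four_pos

theorem isFactor_cons_palindrome {w x y : ℕ} (hw : w < 2) (hx : x < 2) (hy : y < 2) (hxy : x ≠ y) :
    IsFactor [w, x, y, y, x] := by
  have occurs : ∀ w < 2, ∀ x < 2, ∃ n < 12, tmWord n 5 = [w, x, 1 - x, 1 - x, x] := by decide
  obtain rfl : y = 1 - x := by omega
  obtain ⟨n, -, hn⟩ := occurs w hw x hx
  exact hn ▸ isFactor_tmWord n (Nat.succ_pos 4)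

theorem leftSpecial_tmWord_three_iff {m : ℕ} :
    LeftSpecial (tmWord m 3) ↔ tm m ≠ tm (m + 1) := by
  constructor
  · intro h heq
    obtain ⟨n, hn, hnm⟩ := exists_of_leftSpecial_tmWord h (tm_lt_two m)
    refine tm_succ_ne_of_tm_eq_tm_succ (n := n) ?_ ?_
    · exact hn.trans (hnm 0 (by omega)).symm
    · exact (hnm 0 (by omega)).trans (heq.trans (hnm 1 (by omega)).symm)
  · exact fun hne => leftSpecial_iff_forall.2 fun i hi =>
      isFactor_of_middle_ne hi (tm_lt_two m) (tm_lt_two (m + 1)) (tm_lt_two (m + 2)) hne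

-- If the middle letters differ, the extension by a letter different from the first one has its only
-- square of a letter at the end. The extension by the first letter then contains squares at two
-- positions of different parity.
theorem tm_succ_eq_of_leftSpecial_tmWord_four {m : ℕ} (h : LeftSpecial (tmWord m 4)) :
    tm (m + 1) = tm (m + 2) := by
  by_contra hne
  have hm := tm_lt_two m
  obtain ⟨p, hp, hpm⟩ := exists_of_leftSpecial_tmWord h hm
  obtain ⟨q, hq, hqm⟩ := exists_of_leftSpecial_tmWord h (i := 1 - tm m) (by omega)
  simp only [Nat.forall_lt_succ_right, Nat.not_lt_zero, IsEmpty.forall_iff, implies_true,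
    true_and, add_zero, add_assoc, Nat.reduceAdd] at hpm hqm
  have p_square_first : tm p = tm (p + 1) := by omega
  have p_no_cube := tm_succ_ne_of_tm_eq_tm_succ p_square_first
  have q_square_last : tm (q + 3) = tm (q + 4) := by
    obtain ⟨i, hi, heq⟩ := exists_lt_four_tm_eq_tm_succ q
    interval_cases i <;> simp only [add_zero, add_assoc, Nat.reduceAdd] at heq <;> omega
  have p_square_last : tm (p + 3) = tm (p + 4) := by omega
  have p_odd := mod_two_eq_one_of_tm_eq_tm_succ p_square_first
  have p_even := mod_two_eq_one_of_tm_eq_tm_succ p_square_last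
  omega

theorem leftSpecial_tmWord_four_iff {m : ℕ} :
    LeftSpecial (tmWord m 4) ↔ tm (m + 1) = tm (m + 2) := by
  refine ⟨tm_succ_eq_of_leftSpecial_tmWord_four, fun heq => ?_⟩
  have h_left : tm m ≠ tm (m + 1) := fun h => tm_succ_ne_of_tm_eq_tm_succ h heq
  have h_right : tm (m + 2) ≠ tm (m + 3) := tm_succ_ne_of_tm_eq_tm_succ heq
  have h_ends : tm (m + 3) = tm m := by
    have := tm_lt_two m
    have := tm_lt_two (m + 1)
    have := tm_lt_two (m + 3)
    omega
  have hword : tmWord m 4 = [tm m, tm (m + 1), tm (m + 1), tm m] := by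
    rw [show tmWord m 4 = [tm m, tm (m + 1), tm (m + 2), tm (m + 3)] from rfl, ← heq, h_ends]
  rw [hword]
  exact leftSpecial_iff_forall.2 fun i hi =>
    isFactor_cons_palindrome hi (tm_lt_two m) (tm_lt_two (m + 1)) h_left

theorem isFactor_cons_tmWord_two_mul_iff {i a k : ℕ} (hk : 5 ≤ k) (hi : i < 2) :
    IsFactor (i :: tmWord (2 * a) k) ↔ IsFactor ((1 - i) :: tmWord a ((k + 1) / 2)) := by
  have letter_iff (b : ℕ) : tm (2 * b + 1) = i ↔ tm b = 1 - i := by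
    have := tm_lt_two b
    rw [tm_eq_tm_div_two_add, show (2 * b + 1) / 2 = b by omega]
    omega
  have word_iff (b : ℕ) : tmWord (2 * b + 1 + 1) k = tmWord (2 * a) k ↔
      tmWord (b + 1) ((k + 1) / 2) = tmWord a ((k + 1) / 2) := by
    rw [tmWord_eq_iff_of_mod_two_eq (by omega) (by omega),
      show (2 * b + 1 + 1) / 2 = b + 1 by omega, show 2 * a / 2 = a by omega,
      show ((2 * b + 1 + 1) % 2 + k + 1) / 2 = (k + 1) / 2 by omega]
  rw [isFactor_cons_tmWord_iff, isFactor_cons_tmWord_iff]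
  constructor
  · rintro ⟨n, hn, heq⟩
    obtain ⟨b, rfl⟩ : ∃ b, n = 2 * b + 1 :=
      ⟨n / 2, by have := mod_two_eq_of_tmWord_eq hk heq; omega⟩
    exact ⟨b, (letter_iff b).1 hn, (word_iff b).1 heq⟩
  · rintro ⟨b, hb, heq⟩
    exact ⟨2 * b + 1, (letter_iff b).2 hb, (word_iff b).2 heq⟩

theorem eq_of_isFactor_cons_tmWord_two_mul_add_one {i a k : ℕ} (hk : 5 ≤ k)
    (h : IsFactor (i :: tmWord (2 * a + 1) k)) : i = tm (2 * a) := by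
  obtain ⟨n, rfl, heq⟩ := isFactor_cons_tmWord_iff.1 h
  have hn := mod_two_eq_of_tmWord_eq hk heq
  rw [tm_eq_iff_of_mod_two_eq (by omega)]
  have first_eq := tmWord_eq_iff.1 heq 0 (by omega)
  rw [tm_eq_iff_of_mod_two_eq (by omega)] at first_eq
  convert first_eq using 2 <;> omega

theorem not_leftSpecial_tmWord_two_mul_add_one {a k : ℕ} (hk : 5 ≤ k) :
    ¬ LeftSpecial (tmWord (2 * a + 1) k) := fun h =>
  zero_ne_one ((eq_of_isFactor_cons_tmWord_two_mul_add_one hk h.1).trans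
    (eq_of_isFactor_cons_tmWord_two_mul_add_one hk h.2).symm)

theorem leftSpecial_tmWord_two_mul_iff {a k : ℕ} (hk : 5 ≤ k) :
    LeftSpecial (tmWord (2 * a) k) ↔ LeftSpecial (tmWord a ((k + 1) / 2)) := by
  rw [LeftSpecial, isFactor_cons_tmWord_two_mul_iff hk two_pos,
    isFactor_cons_tmWord_two_mul_iff hk one_lt_two, and_comm]
  rfl

/-- The blocks of length `k` at `m` and at `n` are mirror images of each other if `p` holds, and
become so after exchanging the letters `0` and `1` in one of them if `p` fails. The parameter `p` is
there because the two cases are interchanged by desubstitution, see `IsMirror.div_two`. -/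
def IsMirror (p : Prop) (m n k : ℕ) : Prop :=
  ∀ i j, i + j + 1 = k → (tm (m + i) = tm (n + j) ↔ p)

namespace IsMirror

variable {p : Prop} {m n k : ℕ}

theorem tm_eq_tm_succ_iff (h : IsMirror p m n k) {i j : ℕ} (hij : i + j + 2 = k) :
    tm (m + i) = tm (m + i + 1) ↔ tm (n + j) = tm (n + j + 1) := by
  have h₁ := h i (j + 1) (by omega)
  have h₂ := h (i + 1) j (by omega)
  have := tm_lt_two (m + i)
  have := tm_lt_two (m + (i + 1))
  have := tm_lt_two (n + j)
  have := tm_lt_two (n + (j + 1))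
  simp only [add_assoc]
  by_cases p <;> simp_all <;> omega

theorem even_add_add (h : IsMirror p m n k) (hk : 5 ≤ k) : (m + n + k) % 2 = 0 := by
  obtain ⟨i, hi, heq⟩ := exists_lt_four_tm_eq_tm_succ m
  have := mod_two_eq_one_of_tm_eq_tm_succ heq
  have := mod_two_eq_one_of_tm_eq_tm_succ
    ((h.tm_eq_tm_succ_iff (j := k - 2 - i) (by omega)).1 heq)
  omega

theorem div_two (h : IsMirror p m n k) (hk : 0 < k) (hmnk : (m + n + k) % 2 = 0) :
    IsMirror (¬ p) (m / 2) (n / 2) ((m % 2 + k + 1) / 2) := by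
  intro i j hij
  have hp := h (2 * i - m % 2) (k - 1 - (2 * i - m % 2)) (by omega)
  rw [tm_eq_iff_of_mod_two_ne (by omega)] at hp
  rw [← hp, not_not]
  congr! 2 <;> omega

end IsMirror

/-- The defining properties of the function `φ`: it has the value `1 / 6` on factors of length `3`,
and satisfies the recursion which removes the first letter of a longer factor. They determine `φ` on
factors only; its values on other words are irrelevant. -/
structure IsExtensionWeight (φ : List ℕ → ℝ) : Prop where
  eq_of_length_eq_three : ∀ α : List ℕ, IsFactor α → α.length = 3 → φ α = 1 / 6
  cons_of_not_isFactor : ∀ (i : ℕ) (α : List ℕ), IsFactor (i :: α) → 3 ≤ α.length →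
    ¬ IsFactor ((1 - i) :: α) → φ (i :: α) = φ α
  cons_of_isFactor : ∀ (i : ℕ) (α : List ℕ), IsFactor (i :: α) → 3 ≤ α.length →
    IsFactor ((1 - i) :: α) → φ (i :: α) = φ α / 2

namespace IsExtensionWeight

variable {φ : List ℕ → ℝ}

open Classical in
theorem cons_eq_ite (h : IsExtensionWeight φ) {i : ℕ} {α : List ℕ} (hα : IsFactor (i :: α))
    (hlen : 3 ≤ α.length) : φ (i :: α) = if LeftSpecial α then φ α / 2 else φ α := by
  rw [← isFactor_one_sub_cons_iff_leftSpecial hα]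
  split_ifs with hs
  exacts [h.cons_of_isFactor i α hα hlen hs, h.cons_of_not_isFactor i α hα hlen hs]

open Classical in
theorem eq_sum_cons (h : IsExtensionWeight φ) {α : List ℕ} (hα : IsFactor α)
    (hlen : 3 ≤ α.length) :
    φ α = (if IsFactor (0 :: α) then φ (0 :: α) else 0) +
      (if IsFactor (1 :: α) then φ (1 :: α) else 0) := by
  by_cases hs : LeftSpecial α
  · rw [if_pos hs.1, if_pos hs.2, h.cons_eq_ite hs.1 hlen, h.cons_eq_ite hs.2 hlen, if_pos hs,
      add_halves]
  · obtain ⟨i, hi, hcons⟩ := hα.exists_isFactor_cons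
    have hother := mt (isFactor_one_sub_cons_iff_leftSpecial hcons).1 hs
    have hφ := h.cons_of_not_isFactor i α hcons hlen hother
    interval_cases i
    · rw [if_pos hcons, if_neg hother, hφ, add_zero]
    · rw [if_neg hother, if_pos hcons, hφ, zero_add]

theorem tmWord_three (h : IsExtensionWeight φ) (m : ℕ) : φ (tmWord m 3) = 1 / 6 :=
  h.eq_of_length_eq_three _ (isFactor_tmWord m three_pos) (length_tmWord m 3)

open Classical in
theorem tmWord_succ_eq_ite (h : IsExtensionWeight φ) (m : ℕ) {k : ℕ} (hk : 3 ≤ k) :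
    φ (tmWord m (k + 1)) =
      if LeftSpecial (tmWord (m + 1) k) then φ (tmWord (m + 1) k) / 2
      else φ (tmWord (m + 1) k) := by
  have hm := isFactor_tmWord m k.succ_pos
  rw [tmWord_succ] at hm ⊢
  exact h.cons_eq_ite hm (by rwa [length_tmWord])

theorem tmWord_four (h : IsExtensionWeight φ) (m : ℕ) :
    φ (tmWord m 4) = if tm (m + 1) = tm (m + 2) then 1 / 6 else 1 / 12 := by
  rw [h.tmWord_succ_eq_ite m le_rfl, h.tmWord_three]
  simp only [leftSpecial_tmWord_three_iff, ite_not]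
  norm_num

theorem tmWord_five (h : IsExtensionWeight φ) (m : ℕ) : φ (tmWord m 5) = 1 / 12 := by
  rw [h.tmWord_succ_eq_ite m (by decide), h.tmWord_four]
  simp only [leftSpecial_tmWord_four_iff]
  split_ifs <;> norm_num

theorem tmWord_eq_half (h : IsExtensionWeight φ) (m : ℕ) {k : ℕ} (hk : 5 ≤ k) :
    φ (tmWord m k) = φ (tmWord (m / 2) ((m % 2 + k + 1) / 2)) / 2 := by
  induction k, hk using Nat.le_induction generalizing m with
  | base =>
    rw [h.tmWord_five, show (m % 2 + 5 + 1) / 2 = 3 by omega, h.tmWord_three]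
    norm_num
  | succ k hk ih =>
    rw [h.tmWord_succ_eq_ite m (by omega), ih]
    obtain ⟨a, rfl | rfl⟩ := m.even_or_odd'
    · rw [if_neg (not_leftSpecial_tmWord_two_mul_add_one hk)]
      congr 3 <;> omega
    · have hiff : LeftSpecial (tmWord (2 * a + 1 + 1) k) ↔
          LeftSpecial (tmWord (a + 1) ((k + 1) / 2)) := by
        rw [show 2 * a + 1 + 1 = 2 * (a + 1) by ring, leftSpecial_tmWord_two_mul_iff hk]
      rw [show (2 * a + 1 + 1) / 2 = a + 1 by omega, show (2 * a + 1) / 2 = a by omega,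
        show ((2 * a + 1 + 1) % 2 + k + 1) / 2 = (k + 1) / 2 by omega,
        show ((2 * a + 1) % 2 + (k + 1) + 1) / 2 = (k + 1) / 2 + 1 by omega,
        h.tmWord_succ_eq_ite a (by omega), ite_div]
      classical exact if_congr hiff rfl rfl

theorem eq_of_isMirror (h : IsExtensionWeight φ) {p : Prop} {m n k : ℕ} (hk : 3 ≤ k)
    (hmn : IsMirror p m n k) : φ (tmWord m k) = φ (tmWord n k) := by
  induction k using Nat.strong_induction_on generalizing p m n with
  | _ k ih =>
    obtain rfl | rfl | hk5 : k = 3 ∨ k = 4 ∨ 5 ≤ k := by omega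
    · rw [h.tmWord_three, h.tmWord_three]
    · simp only [h.tmWord_four, hmn.tm_eq_tm_succ_iff (i := 1) (j := 1) rfl]
    · have hpar := hmn.even_add_add hk5
      rw [h.tmWord_eq_half m hk5, h.tmWord_eq_half n hk5,
        show (n % 2 + k + 1) / 2 = (m % 2 + k + 1) / 2 by omega,
        ih _ (by omega) (by omega) (hmn.div_two (by omega) hpar)]

theorem reverse_eq (h : IsExtensionWeight φ) {α : List ℕ} (hα : IsFactor α)
    (hlen : 3 ≤ α.length) : φ α.reverse = φ α := by
  obtain ⟨-, m, hm⟩ := isFactor_iff_exists_tmWord.1 hα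
  obtain ⟨-, n, hn⟩ := isFactor_iff_exists_tmWord.1 hα.reverse
  rw [List.length_reverse] at hn
  have mirror : IsMirror True n m α.length := fun i j hij => by
    have hi : tm (n + i) = (tmWord n α.length)[i]'(by rw [length_tmWord]; omega) := by
      simp [tmWord]
    have hj : tm (m + j) = (tmWord m α.length)[j]'(by rw [length_tmWord]; omega) := by
      simp [tmWord]
    simp only [hi, hj, ← hn, ← hm, List.getElem_reverse, iff_true]
    congr 1
    omega
  calc φ α.reverse = φ (tmWord n α.length) := by rw [← hn]
    _ = φ (tmWord m α.length) := h.eq_of_isMirror hlen mirror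
    _ = φ α := by rw [← hm]

open Classical in
theorem eq_sum_append (h : IsExtensionWeight φ) {α : List ℕ} (hα : IsFactor α)
    (hlen : 3 ≤ α.length) :
    φ α = (if IsFactor (α ++ [0]) then φ (α ++ [0]) else 0) +
      (if IsFactor (α ++ [1]) then φ (α ++ [1]) else 0) := by
  have term_eq (i : ℕ) : (if IsFactor (i :: α.reverse) then φ (i :: α.reverse) else 0) =
      if IsFactor (α ++ [i]) then φ (α ++ [i]) else 0 := by
    rw [← List.reverse_concat', isFactor_reverse_iff]
    split_ifs with hi
    · exact h.reverse_eq hi (by rw [List.length_append]; omega)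
    · rfl
  rw [← h.reverse_eq hα hlen, h.eq_sum_cons hα.reverse (by rwa [List.length_reverse]), term_eq,
    term_eq]

end IsExtensionWeight

open Classical in
/-- The function `φ` on factors of the two-sided Thue–Morse sequence (defined by recursion
on the length: `φ(α) = 1/6` for `|α| = 3`, `φ(iα) = φ(α)` if `(1-i)α` is not a factor, and
`φ(iα) = φ(α)/2` if `(1-i)α` is a factor) is additive under one-letter extensions on
either side. -/
theorem phi_extension_sums (φ : List ℕ → ℝ)
    (hφ3 : ∀ α : List ℕ, IsFactor α → α.length = 3 → φ α = 1 / 6)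
    (hφ1 : ∀ (i : ℕ) (α : List ℕ), IsFactor (i :: α) → 3 ≤ α.length →
      ¬ IsFactor ((1 - i) :: α) → φ (i :: α) = φ α)
    (hφ2 : ∀ (i : ℕ) (α : List ℕ), IsFactor (i :: α) → 3 ≤ α.length →
      IsFactor ((1 - i) :: α) → φ (i :: α) = φ α / 2) :
    ∀ α : List ℕ, IsFactor α → 3 ≤ α.length →
      (φ α = (if IsFactor (α ++ [0]) then φ (α ++ [0]) else 0) +
             (if IsFactor (α ++ [1]) then φ (α ++ [1]) else 0)) ∧
      (φ α = (if IsFactor (0 :: α) then φ (0 :: α) else 0) +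
             (if IsFactor (1 :: α) then φ (1 :: α) else 0)) := by
  have h : IsExtensionWeight φ := ⟨hφ3, hφ1, hφ2⟩
  exact fun α hα hlen => ⟨h.eq_sum_append hα hlen, h.eq_sum_cons hα hlen⟩
end
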